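/- arXiv:2304.03056 — 2 statements merged into one kernel-verified Lean document; each statement's English description precedes it below -/
import Mathlib

section
/- Hoeffding-type inequality for the Dirichlet process posterior mean (conditional form via Bayesian bootstrap weights): Let n ≥ 1, fix ε ∈ (0,1) and γ ≥ c₀·ε^{−2} + 1, and let g_0, g_1, …, g_{n+1} ∈ [0,1] with g_0 = 0 and g_{n+1} = 1. Let w ∼ Dir(γ, 1, …, 1, γ) be a Dirichlet random vector on Δ_{n+1} (parameter γ in positions 0 and n+1, and 1 in the n middle positions), and set W = Σ_{i=0}^{n+1} w_i g_i and ĝ = (1/n) Σ_{i=1}^n g_i. Then for every δ ∈ (0,1), P( W − ĝ ≥ √( log((1+ε)/δ) / (2(n + 2γ − 1)) ) + γ/(n + 2γ − 1) ) ≤ δ. -/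
open MeasureTheory ProbabilityTheory Real Set
open scoped ENNReal

noncomputable section

/-- The absolute constant `c₀ = (2/π)(8 + 49√6/9)²`. -/
def c0 : ℝ := (2 / Real.pi) * (8 + 49 * Real.sqrt 6 / 9) ^ 2

/-- Unnormalized density of `Dir(α)` in the first `m` coordinates. -/
def dirichletDensity (m : ℕ) (α : Fin (m + 1) → ℝ) : (Fin m → ℝ) → ℝ :=
  Set.indicator {x | (∀ i, 0 ≤ x i) ∧ ∑ i, x i ≤ 1}
    (fun x => (∏ i : Fin m, x i ^ (α i.castSucc - 1)) * (1 - ∑ i, x i) ^ (α (Fin.last m) - 1))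

def dirichletBase (m : ℕ) (α : Fin (m + 1) → ℝ) : Measure (Fin m → ℝ) :=
  volume.withDensity fun x => ENNReal.ofReal (dirichletDensity m α x)

/-- The Dirichlet distribution `Dir(α)`, as the law of the vector
`(x₀, …, x_{m-1}, 1 - ∑ x_i)` on the simplex `Δ_m ⊆ ℝ^{m+1}`. -/
def dirichlet (m : ℕ) (α : Fin (m + 1) → ℝ) : Measure (Fin (m + 1) → ℝ) :=
  Measure.map (fun x : Fin m → ℝ => Fin.snoc x (1 - ∑ i, x i))
    ((dirichletBase m α Set.univ)⁻¹ • dirichletBase m α)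

/-- Kullback–Leibler divergence between finitely supported `p, q` (for `p ≪ q`). -/
def klReal {m : ℕ} (p q : Fin (m + 1) → ℝ) : ℝ :=
  ∑ i, if p i = 0 then 0 else p i * Real.log (p i / q i)

/-- `Kinf(p, μ, f) = inf { KL(p,q) : q ∈ Δ_m, qf ≥ μ }`. -/
def Kinf {m : ℕ} (p : Fin (m + 1) → ℝ) (μ : ℝ) (f : Fin (m + 1) → ℝ) : ℝ :=
  sInf {x | ∃ q ∈ stdSimplex ℝ (Fin (m + 1)),
    (∀ i, q i = 0 → p i = 0) ∧ μ ≤ ∑ i, f i * q i ∧ x = klReal p q}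

/-- `Kinf*(p, μ, f) = inf { KL(p,q) : q ∈ Δ_m, qf = μ }`. -/
def Kinfstar {m : ℕ} (p : Fin (m + 1) → ℝ) (μ : ℝ) (f : Fin (m + 1) → ℝ) : ℝ :=
  sInf {x | ∃ q ∈ stdSimplex ℝ (Fin (m + 1)),
    (∀ i, q i = 0 → p i = 0) ∧ (∑ i, f i * q i) = μ ∧ x = klReal p q}

/-- `A(p, μ, f) = sgn(μ - pf) √(2 Kinf*(p, μ, f))`. -/
def Afun {m : ℕ} (p : Fin (m + 1) → ℝ) (μ : ℝ) (f : Fin (m + 1) → ℝ) : ℝ :=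
  Real.sign (μ - ∑ ℓ, f ℓ * p ℓ) * Real.sqrt (2 * Kinfstar p μ f)

/-!
Independent Gamma variables of shapes `αᵢ` and rates `aᵢ`, written as `r • w` with `w` in the
simplex, give the Markov–Krein identity `E[(∑ aᵢ wᵢ)^{-N}] = ∏ aᵢ^{-αᵢ}` for `w ∼ Dir(α)` and
`N = ∑ αᵢ`. It plays the role of the Laplace transform in Chernoff's method: if `p` is the mean of
`∑ wᵢ gᵢ`, with `g` valued in `[0, 1]`, choose `aᵢ` affine in `gᵢ` between the likelihood ratios
`(1 - p) / (1 - q)` and `p / q` of two Bernoulli distributions. Then `∑ wᵢ gᵢ ≥ q` forces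
`∑ aᵢ wᵢ ≤ 1`, and Markov's inequality with the concavity of `log` yields the bound
`exp (-N kl(p, q))`, hence `exp (-2 N (q - p)²)` by Pinsker's inequality. For the weights of the
posterior, `N = n + 2γ`, and `p` exceeds the empirical mean by at most `γ / N`.
-/

section LebesgueIntegral

lemma lintegral_fin_prod_eq_prod_lintegral {n : ℕ} {X : Fin n → Type*}
    [∀ i, MeasurableSpace (X i)] (μ : ∀ i, Measure (X i)) [∀ i, SigmaFinite (μ i)]
    {f : ∀ i, X i → ℝ≥0∞} (hf : ∀ i, Measurable (f i)) :
    ∫⁻ x, ∏ i, f i (x i) ∂Measure.pi μ = ∏ i, ∫⁻ t, f i t ∂μ i := by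
  induction n with
  | zero => simp
  | succ n ih =>
    have hf_tail : Measurable fun y : ∀ i : Fin n, X i.succ ↦ ∏ i, f i.succ (y i) := by fun_prop
    calc ∫⁻ x, ∏ i, f i (x i) ∂Measure.pi μ
        = ∫⁻ x : X 0 × ∀ i : Fin n, X i.succ, f 0 x.1 * ∏ i, f i.succ (x.2 i)
            ∂(μ 0).prod (Measure.pi fun i ↦ μ i.succ) := by
          rw [← (measurePreserving_piFinSuccAbove μ 0).symm.lintegral_comp (by fun_prop)]
          simp_rw [Fin.prod_univ_succ]
          rfl
      _ = ∏ i, ∫⁻ t, f i t ∂μ i := by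
          rw [lintegral_prod_mul (hf 0).aemeasurable hf_tail.aemeasurable, ih _ fun i ↦ hf i.succ,
            Fin.prod_univ_succ]

lemma enorm_pow_finrank_mul_lintegral_comp_smul {E : Type*} [NormedAddCommGroup E]
    [NormedSpace ℝ E] [FiniteDimensional ℝ E] [MeasurableSpace E] [BorelSpace E]
    (μ : Measure E) [μ.IsAddHaarMeasure] {r : ℝ} (hr : r ≠ 0) (f : E → ℝ≥0∞) :
    ‖r‖ₑ ^ Module.finrank ℝ E * ∫⁻ x, f (r • x) ∂μ = ∫⁻ x, f x ∂μ := by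
  have hemb : MeasurableEmbedding fun x : E ↦ r • x :=
    (Homeomorph.smulOfNeZero r hr).measurableEmbedding
  have hinv : ‖r‖ₑ ^ Module.finrank ℝ E * ENNReal.ofReal |(r ^ Module.finrank ℝ E)⁻¹| = 1 := by
    rw [← Real.enorm_eq_ofReal_abs, ← enorm_pow, ← enorm_mul, mul_inv_cancel₀ (pow_ne_zero _ hr),
      enorm_one]
  rw [← hemb.lintegral_map, Measure.map_addHaar_smul μ hr, lintegral_smul_measure, smul_eq_mul,
    ← mul_assoc, hinv, one_mul]

end LebesgueIntegral

section Simplex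

/-- The point of the hyperplane `∑ i, p i = 1` of `ℝ^{m+1}` whose first `m` coordinates are `x`:
the map whose law under the normalized density is `dirichlet`. -/
def simplexPoint {m : ℕ} (x : Fin m → ℝ) : Fin (m + 1) → ℝ :=
  Fin.snoc x (1 - ∑ i, x i)

variable {m : ℕ}

@[simp]
lemma simplexPoint_castSucc (x : Fin m → ℝ) (i : Fin m) : simplexPoint x i.castSucc = x i :=
  Fin.snoc_castSucc ..

@[simp]
lemma simplexPoint_last (x : Fin m → ℝ) : simplexPoint x (Fin.last m) = 1 - ∑ i, x i :=
  Fin.snoc_last ..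

lemma sum_simplexPoint (x : Fin m → ℝ) : ∑ i, simplexPoint x i = 1 := by
  simp [Fin.sum_univ_castSucc]

@[fun_prop]
lemma measurable_simplexPoint : Measurable (simplexPoint : (Fin m → ℝ) → Fin (m + 1) → ℝ) := by
  refine measurable_pi_iff.2 (Fin.lastCases ?_ fun i ↦ ?_)
  · simp only [simplexPoint_last]
    fun_prop
  · simp only [simplexPoint_castSucc]
    fun_prop

lemma smul_simplexPoint (r : ℝ) (x : Fin m → ℝ) :
    r • simplexPoint x = Fin.snoc (r • x) (r - ∑ i, (r • x) i) := by
  ext i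
  refine Fin.lastCases ?_ (fun j ↦ ?_) i
  · simp [mul_sub, Finset.mul_sum]
  · simp

lemma lintegral_eq_lintegral_lintegral_snoc {F : (Fin (m + 1) → ℝ) → ℝ≥0∞} (hF : Measurable F) :
    ∫⁻ y, F y = ∫⁻ z : Fin m → ℝ, ∫⁻ t : ℝ, F (Fin.snoc z t) := by
  have hpres := (volume_preserving_piFinSuccAbove (fun _ : Fin (m + 1) ↦ ℝ) (Fin.last m)).symm
  rw [← hpres.lintegral_comp hF, Measure.volume_eq_prod, lintegral_prod_symm' _ (by fun_prop)]
  simp [MeasurableEquiv.piFinSuccAbove_symm_apply, Fin.insertNthEquiv_last, Fin.snocEquiv]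

/-- Shifting the last coordinate by the sum of the others and then scaling these by the total `r`
replaces the Jacobian of `(x, r) ↦ r • simplexPoint x`. -/
lemma lintegral_eq_lintegral_smul_simplexPoint {F : (Fin (m + 1) → ℝ) → ℝ≥0∞}
    (hF : Measurable F) :
    ∫⁻ y, F y = ∫⁻ x : Fin m → ℝ, ∫⁻ r : ℝ, ‖r‖ₑ ^ m * F (r • simplexPoint x) := by
  have hsnoc : Measurable fun p : (Fin m → ℝ) × ℝ ↦
      F (Fin.snoc p.1 (p.2 - ∑ i, p.1 i) : Fin (m + 1) → ℝ) := by
    refine hF.comp (measurable_pi_iff.2 (Fin.lastCases ?_ fun i ↦ ?_))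
    · simp only [Fin.snoc_last]
      fun_prop
    · simp only [Fin.snoc_castSucc]
      fun_prop
  calc ∫⁻ y, F y = ∫⁻ z : Fin m → ℝ, ∫⁻ t : ℝ, F (Fin.snoc z t) :=
        lintegral_eq_lintegral_lintegral_snoc hF
    _ = ∫⁻ z : Fin m → ℝ, ∫⁻ r : ℝ, F (Fin.snoc z (r - ∑ i, z i)) :=
        lintegral_congr fun z ↦ (lintegral_sub_right_eq_self (fun t ↦ F (Fin.snoc z t)) _).symm
    _ = ∫⁻ r : ℝ, ∫⁻ z : Fin m → ℝ, F (Fin.snoc z (r - ∑ i, z i)) :=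
        lintegral_lintegral_swap hsnoc.aemeasurable
    _ = ∫⁻ r : ℝ, ‖r‖ₑ ^ m * ∫⁻ x : Fin m → ℝ, F (r • simplexPoint x) := by
        refine lintegral_congr_ae ?_
        filter_upwards [Measure.ae_ne volume 0] with r hr
        simp only [smul_simplexPoint]
        rw [← enorm_pow_finrank_mul_lintegral_comp_smul _ hr, Module.finrank_fin_fun]
    _ = ∫⁻ r : ℝ, ∫⁻ x : Fin m → ℝ, ‖r‖ₑ ^ m * F (r • simplexPoint x) :=
        lintegral_congr fun r ↦ (lintegral_const_mul _ (by fun_prop)).symm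
    _ = ∫⁻ x : Fin m → ℝ, ∫⁻ r : ℝ, ‖r‖ₑ ^ m * F (r • simplexPoint x) :=
        lintegral_lintegral_swap (by fun_prop)

lemma sum_mul_pos_of_mem_stdSimplex {ι : Type*} [Fintype ι] {a w : ι → ℝ} (ha : ∀ i, 0 < a i)
    (hw : w ∈ stdSimplex ℝ ι) : 0 < ∑ i, a i * w i := by
  obtain ⟨j, hj⟩ : ∃ j, 0 < w j := by
    by_contra! h
    have hsum := Finset.sum_nonpos fun i (_ : i ∈ Finset.univ) ↦ h i
    linarith [hw.2]
  exact Finset.sum_pos' (fun i _ ↦ mul_nonneg (ha i).le (hw.1 i))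
    ⟨j, Finset.mem_univ j, mul_pos (ha j) hj⟩

end Simplex

section DirichletDensity

@[fun_prop]
lemma measurable_gammaPDF (a r : ℝ) : Measurable (gammaPDF a r) :=
  (measurable_gammaPDFReal a r).ennreal_ofReal

/-- The multivariate beta function `B(α) = ∏ Γ(αᵢ) / Γ(∑ αᵢ)`, the normalizing constant of the
Dirichlet density. -/
def multivariateBeta {ι : Type*} [Fintype ι] (α : ι → ℝ) : ℝ :=
  (∏ i, Gamma (α i)) / Gamma (∑ i, α i)

lemma multivariateBeta_pos {ι : Type*} [Fintype ι] [Nonempty ι] {α : ι → ℝ} (hα : ∀ i, 0 < α i) :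
    0 < multivariateBeta α :=
  div_pos (Finset.prod_pos fun i _ ↦ Gamma_pos_of_pos (hα i))
    (Gamma_pos_of_pos (Finset.sum_pos (fun i _ ↦ hα i) Finset.univ_nonempty))

variable {m : ℕ} {α a : Fin (m + 1) → ℝ}

lemma simplexPoint_mem_stdSimplex_iff {x : Fin m → ℝ} :
    simplexPoint x ∈ stdSimplex ℝ (Fin (m + 1)) ↔ (∀ i, 0 ≤ x i) ∧ ∑ i, x i ≤ 1 := by
  simp [stdSimplex, sum_simplexPoint, Fin.forall_fin_succ', sub_nonneg]

lemma dirichletDensity_eq_indicator :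
    dirichletDensity m α = (simplexPoint ⁻¹' stdSimplex ℝ (Fin (m + 1))).indicator
      fun x ↦ ∏ i, simplexPoint x i ^ (α i - 1) := by
  have hsupport : simplexPoint ⁻¹' stdSimplex ℝ (Fin (m + 1)) =
      {x : Fin m → ℝ | (∀ i, 0 ≤ x i) ∧ ∑ i, x i ≤ 1} :=
    Set.ext fun _ ↦ simplexPoint_mem_stdSimplex_iff
  simp [dirichletDensity, hsupport, Fin.prod_univ_castSucc]

lemma dirichletDensity_of_mem {x : Fin m → ℝ} (hx : simplexPoint x ∈ stdSimplex ℝ (Fin (m + 1))) :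
    dirichletDensity m α x = ∏ i, simplexPoint x i ^ (α i - 1) := by
  rw [dirichletDensity_eq_indicator, indicator_of_mem (mem_preimage.2 hx)]

lemma dirichletDensity_of_notMem {x : Fin m → ℝ}
    (hx : simplexPoint x ∉ stdSimplex ℝ (Fin (m + 1))) : dirichletDensity m α x = 0 := by
  rw [dirichletDensity_eq_indicator, indicator_of_notMem (mt mem_preimage.1 hx)]

lemma dirichletDensity_nonneg (x : Fin m → ℝ) : 0 ≤ dirichletDensity m α x := by
  by_cases hx : simplexPoint x ∈ stdSimplex ℝ (Fin (m + 1))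
  · rw [dirichletDensity_of_mem hx]
    exact Finset.prod_nonneg fun i _ ↦ rpow_nonneg (hx.1 i) _
  · rw [dirichletDensity_of_notMem hx]

@[fun_prop]
lemma measurable_dirichletDensity : Measurable (dirichletDensity m α) := by
  rw [dirichletDensity_eq_indicator]
  exact Measurable.indicator (by fun_prop)
    (measurable_simplexPoint (isClosed_stdSimplex ℝ _).measurableSet)

lemma prod_gammaPDFReal_mul_of_mem_stdSimplex {w : Fin (m + 1) → ℝ}
    (hw : w ∈ stdSimplex ℝ (Fin (m + 1))) {r : ℝ} (hr : 0 < r) :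
    ∏ i, gammaPDFReal (α i) (a i) (r * w i) =
      (∏ i, a i ^ α i / Gamma (α i)) * r ^ (∑ i, α i - 1 - m) * (∏ i, w i ^ (α i - 1)) *
        exp (-((∑ i, a i * w i) * r)) := by
  have hfactor (i : Fin (m + 1)) : gammaPDFReal (α i) (a i) (r * w i) =
      a i ^ α i / Gamma (α i) * r ^ (α i - 1) * w i ^ (α i - 1) * exp (-(a i * w i * r)) := by
    rw [gammaPDFReal, if_pos (mul_nonneg hr.le (hw.1 i)), mul_rpow hr.le (hw.1 i)]
    ring_nf
  have hexponent : ∑ i, (α i - 1) = ∑ i, α i - 1 - m := by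
    simp [Finset.sum_sub_distrib]
    ring
  simp_rw [hfactor, Finset.prod_mul_distrib, ← exp_sum, ← rpow_sum_of_pos hr, hexponent,
    Finset.sum_mul, Finset.sum_neg_distrib]

lemma prod_gammaPDFReal_eq_zero {y : Fin (m + 1) → ℝ} (hy : ∃ i, y i < 0) :
    ∏ i, gammaPDFReal (α i) (a i) (y i) = 0 := by
  obtain ⟨i, hi⟩ := hy
  exact Finset.prod_eq_zero (Finset.mem_univ i) (if_neg hi.not_ge)

lemma multivariateBeta_mul_prod_gammaPDFReal (hα : ∀ i, 0 < α i) (ha : ∀ i, 0 < a i)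
    (x : Fin m → ℝ) {r : ℝ} (hr : r ≠ 0) :
    multivariateBeta α * (|r| ^ m * ∏ i, gammaPDFReal (α i) (a i) (r * simplexPoint x i)) =
      (∏ i, a i ^ α i) * (dirichletDensity m α x * (∑ i, a i * simplexPoint x i) ^ (-∑ i, α i)) *
        gammaPDFReal (∑ i, α i) (∑ i, a i * simplexPoint x i) r := by
  have hN : 0 < ∑ i, α i := Finset.sum_pos (fun i _ ↦ hα i) Finset.univ_nonempty
  have hcoord (hx : simplexPoint x ∉ stdSimplex ℝ (Fin (m + 1))) : ∃ i, simplexPoint x i < 0 := by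
    by_contra! h
    exact hx ⟨h, sum_simplexPoint x⟩
  rcases hr.lt_or_gt with hr | hr
  · have hpos : ∃ i, 0 < simplexPoint x i := by
      by_contra! h
      linarith [Finset.sum_nonpos fun i (_ : i ∈ Finset.univ) ↦ h i, sum_simplexPoint x]
    rw [prod_gammaPDFReal_eq_zero (hpos.imp fun i hi ↦ mul_neg_of_neg_of_pos hr hi),
      gammaPDFReal, if_neg hr.not_ge]
    ring
  by_cases hx : simplexPoint x ∈ stdSimplex ℝ (Fin (m + 1))
  · have hc : 0 < ∑ i, a i * simplexPoint x i := sum_mul_pos_of_mem_stdSimplex ha hx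
    have hΓ : ∏ i, Gamma (α i) ≠ 0 :=
      Finset.prod_ne_zero_iff.2 fun i _ ↦ (Gamma_pos_of_pos (hα i)).ne'
    have hΓN := (Gamma_pos_of_pos hN).ne'
    have hpow : r ^ (∑ i, α i - 1) = r ^ m * r ^ (∑ i, α i - 1 - m) := by
      rw [← rpow_natCast, ← rpow_add hr, add_sub_cancel]
    rw [prod_gammaPDFReal_mul_of_mem_stdSimplex hx hr, dirichletDensity_of_mem hx, gammaPDFReal,
      if_pos hr.le, abs_of_pos hr, multivariateBeta, Finset.prod_div_distrib, rpow_neg hc.le, hpow]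
    field_simp
  · rw [prod_gammaPDFReal_eq_zero ((hcoord hx).imp fun i hi ↦ mul_neg_of_pos_of_neg hr hi),
      dirichletDensity_of_notMem hx]
    ring

lemma dirichletDensity_mul_rpow_nonneg (ha : ∀ i, 0 < a i) (s : ℝ) (x : Fin m → ℝ) :
    0 ≤ dirichletDensity m α x * (∑ i, a i * simplexPoint x i) ^ s := by
  by_cases hx : simplexPoint x ∈ stdSimplex ℝ (Fin (m + 1))
  · exact mul_nonneg (dirichletDensity_nonneg x)
      (rpow_nonneg (sum_mul_pos_of_mem_stdSimplex ha hx).le s)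
  · rw [dirichletDensity_of_notMem hx, zero_mul]

lemma multivariateBeta_mul_prod_gammaPDF (hα : ∀ i, 0 < α i) (ha : ∀ i, 0 < a i)
    (x : Fin m → ℝ) {r : ℝ} (hr : r ≠ 0) :
    ENNReal.ofReal (multivariateBeta α) *
        (‖r‖ₑ ^ m * ∏ i, gammaPDF (α i) (a i) (r * simplexPoint x i)) =
      ENNReal.ofReal (∏ i, a i ^ α i) *
        ENNReal.ofReal (dirichletDensity m α x * (∑ i, a i * simplexPoint x i) ^ (-∑ i, α i)) *
        gammaPDF (∑ i, α i) (∑ i, a i * simplexPoint x i) r := by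
  have hA : 0 ≤ ∏ i, a i ^ α i := Finset.prod_nonneg fun i _ ↦ rpow_nonneg (ha i).le _
  simp_rw [gammaPDF]
  rw [← ENNReal.ofReal_prod_of_nonneg fun i _ ↦ gammaPDFReal_nonneg (hα i) (ha i) _,
    enorm_eq_ofReal_abs, ← ENNReal.ofReal_pow (abs_nonneg r), ← ENNReal.ofReal_mul (by positivity),
    ← ENNReal.ofReal_mul (multivariateBeta_pos hα).le, ← ENNReal.ofReal_mul hA,
    ← ENNReal.ofReal_mul (mul_nonneg hA (dirichletDensity_mul_rpow_nonneg ha _ x)),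
    multivariateBeta_mul_prod_gammaPDFReal hα ha x hr]

lemma multivariateBeta_mul_lintegral_prod_gammaPDF (hα : ∀ i, 0 < α i) (ha : ∀ i, 0 < a i)
    (x : Fin m → ℝ) :
    ENNReal.ofReal (multivariateBeta α) *
        ∫⁻ r : ℝ, ‖r‖ₑ ^ m * ∏ i, gammaPDF (α i) (a i) (r * simplexPoint x i) =
      ENNReal.ofReal (∏ i, a i ^ α i) *
        ENNReal.ofReal
          (dirichletDensity m α x * (∑ i, a i * simplexPoint x i) ^ (-∑ i, α i)) := by
  have hN : 0 < ∑ i, α i := Finset.sum_pos (fun i _ ↦ hα i) Finset.univ_nonempty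
  rw [← lintegral_const_mul _ (by fun_prop), lintegral_congr_ae <|
      (Measure.ae_ne volume 0).mono fun r hr ↦ multivariateBeta_mul_prod_gammaPDF hα ha x hr,
    lintegral_const_mul _ (by fun_prop)]
  by_cases hx : simplexPoint x ∈ stdSimplex ℝ (Fin (m + 1))
  · rw [lintegral_gammaPDF_eq_one hN (sum_mul_pos_of_mem_stdSimplex ha hx), mul_one]
  · simp [dirichletDensity_of_notMem hx]

end DirichletDensity

section Dirichlet

variable {m : ℕ} {α a : Fin (m + 1) → ℝ}

lemma dirichlet_eq_map : dirichlet m α =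
    ((dirichletBase m α univ)⁻¹ • dirichletBase m α).map simplexPoint := rfl

lemma lintegral_dirichletDensity_mul_rpow (hα : ∀ i, 0 < α i) (ha : ∀ i, 0 < a i) :
    ∫⁻ x, ENNReal.ofReal
        (dirichletDensity m α x * (∑ i, a i * simplexPoint x i) ^ (-∑ i, α i)) =
      ENNReal.ofReal (multivariateBeta α) * ENNReal.ofReal (∏ i, a i ^ (-α i)) := by
  have hA : 0 < ∏ i, a i ^ α i := Finset.prod_pos fun i _ ↦ rpow_pos_of_pos (ha i) _
  have hAinv : ∏ i, a i ^ (-α i) = (∏ i, a i ^ α i)⁻¹ := by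
    simp_rw [rpow_neg (ha _).le, Finset.prod_inv_distrib]
  have hmass : ∫⁻ y : Fin (m + 1) → ℝ, ∏ i, gammaPDF (α i) (a i) (y i) = 1 := by
    rw [volume_pi, lintegral_fin_prod_eq_prod_lintegral _ fun i ↦ measurable_gammaPDF _ _]
    exact Finset.prod_eq_one fun i _ ↦ lintegral_gammaPDF_eq_one (hα i) (ha i)
  have hpolar : ENNReal.ofReal (multivariateBeta α) = ENNReal.ofReal (∏ i, a i ^ α i) *
      ∫⁻ x, ENNReal.ofReal
        (dirichletDensity m α x * (∑ i, a i * simplexPoint x i) ^ (-∑ i, α i)) := by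
    rw [← lintegral_const_mul _ (by fun_prop),
      ← lintegral_congr fun x ↦ multivariateBeta_mul_lintegral_prod_gammaPDF hα ha x,
      lintegral_const_mul' _ _ ENNReal.ofReal_ne_top]
    rw [lintegral_eq_lintegral_smul_simplexPoint (by fun_prop)] at hmass
    simp only [Pi.smul_apply, smul_eq_mul] at hmass
    rw [hmass, mul_one]
  rw [hpolar, hAinv, ENNReal.ofReal_inv_of_pos hA, mul_comm, ← mul_assoc,
    ENNReal.inv_mul_cancel (ENNReal.ofReal_pos.2 hA).ne' ENNReal.ofReal_ne_top, one_mul]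

lemma dirichletBase_univ (hα : ∀ i, 0 < α i) :
    dirichletBase m α univ = ENNReal.ofReal (multivariateBeta α) := by
  rw [dirichletBase, withDensity_apply _ MeasurableSet.univ, Measure.restrict_univ]
  simpa [sum_simplexPoint] using lintegral_dirichletDensity_mul_rpow hα fun _ ↦ one_pos

lemma lintegral_dirichlet {f : (Fin (m + 1) → ℝ) → ℝ≥0∞} (hf : Measurable f) :
    ∫⁻ w, f w ∂dirichlet m α = (dirichletBase m α univ)⁻¹ *
      ∫⁻ x, ENNReal.ofReal (dirichletDensity m α x) * f (simplexPoint x) := by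
  rw [dirichlet_eq_map, lintegral_map hf measurable_simplexPoint, lintegral_smul_measure,
    smul_eq_mul, dirichletBase,
    lintegral_withDensity_eq_lintegral_mul _ (by fun_prop) (by fun_prop)]
  rfl

lemma lintegral_rpow_sum_mul_dirichlet (hα : ∀ i, 0 < α i) (ha : ∀ i, 0 < a i) :
    ∫⁻ w, ENNReal.ofReal ((∑ i, a i * w i) ^ (-∑ i, α i)) ∂dirichlet m α =
      ENNReal.ofReal (∏ i, a i ^ (-α i)) := by
  have hB : ENNReal.ofReal (multivariateBeta α) ≠ 0 :=
    (ENNReal.ofReal_pos.2 (multivariateBeta_pos hα)).ne'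
  rw [lintegral_dirichlet (by fun_prop)]
  simp_rw [← ENNReal.ofReal_mul (dirichletDensity_nonneg _)]
  rw [lintegral_dirichletDensity_mul_rpow hα ha, dirichletBase_univ hα,
    ENNReal.inv_mul_cancel_left hB ENNReal.ofReal_ne_top]

lemma ae_mem_stdSimplex_dirichlet : ∀ᵐ w ∂dirichlet m α, w ∈ stdSimplex ℝ (Fin (m + 1)) := by
  rw [dirichlet_eq_map]
  refine (ae_map_iff (by fun_prop) (isClosed_stdSimplex ℝ _).measurableSet).2
    (Measure.ae_smul_measure ?_ _)
  rw [dirichletBase, ae_withDensity_iff (by fun_prop)]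
  refine ae_of_all _ fun x hx ↦ by_contra fun hnot ↦ hx ?_
  rw [dirichletDensity_of_notMem hnot, ENNReal.ofReal_zero]

lemma dirichlet_sum_mul_le_one_le (hα : ∀ i, 0 < α i) (ha : ∀ i, 0 < a i) :
    dirichlet m α {w | ∑ i, a i * w i ≤ 1} ≤ ENNReal.ofReal (∏ i, a i ^ (-α i)) := by
  have hN : 0 ≤ ∑ i, α i := Finset.sum_nonneg fun i _ ↦ (hα i).le
  calc dirichlet m α {w | ∑ i, a i * w i ≤ 1}
      ≤ dirichlet m α {w | 1 ≤ ENNReal.ofReal ((∑ i, a i * w i) ^ (-∑ i, α i))} := by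
        refine measure_mono_ae ?_
        filter_upwards [ae_mem_stdSimplex_dirichlet] with w hw hle
        exact ENNReal.one_le_ofReal.2 <| one_le_rpow_of_pos_of_le_one_of_nonpos
          (sum_mul_pos_of_mem_stdSimplex ha hw) hle (neg_nonpos.2 hN)
    _ ≤ ∫⁻ w, ENNReal.ofReal ((∑ i, a i * w i) ^ (-∑ i, α i)) ∂dirichlet m α := by
        simpa using mul_meas_ge_le_lintegral (μ := dirichlet m α)
          (f := fun w ↦ ENNReal.ofReal ((∑ i, a i * w i) ^ (-∑ i, α i))) (by fun_prop) 1
    _ = ENNReal.ofReal (∏ i, a i ^ (-α i)) := lintegral_rpow_sum_mul_dirichlet hα ha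

end Dirichlet

section BernoulliKL

/-- The Kullback–Leibler divergence between the Bernoulli distributions of parameters `p` and `q`,
the exponential rate in the Chernoff bound for Dirichlet means. It takes the intended value for
`p, q ∈ (0, 1)`. -/
def bernoulliKL (p q : ℝ) : ℝ :=
  p * log (p / q) + (1 - p) * log ((1 - p) / (1 - q))

lemma hasDerivAt_bernoulliKL {p q : ℝ} (hp : p ∈ Ioo 0 1) (hq : q ∈ Ioo 0 1) :
    HasDerivAt (bernoulliKL p) ((q - p) / (q * (1 - q))) q := by
  have hp0 : p ≠ 0 := hp.1.ne'
  have hq0 : q ≠ 0 := hq.1.ne'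
  have hq1 : 1 - q ≠ 0 := (sub_pos.2 hq.2).ne'
  have hp1 : 1 - p ≠ 0 := (sub_pos.2 hp.2).ne'
  have hlog := ((hasDerivAt_inv hq0).const_mul p).log (mul_ne_zero hp0 (inv_ne_zero hq0))
  have hlog' := ((((hasDerivAt_id q).const_sub 1).inv hq1).const_mul (1 - p)).log
    (mul_ne_zero hp1 (inv_ne_zero hq1))
  convert! (hlog.const_mul p).add (hlog'.const_mul (1 - p)) using 1
  simp only [id, Pi.inv_apply]
  field_simp
  ring

lemma two_mul_sq_sub_le_bernoulliKL {p q : ℝ} (hp : 0 < p) (hpq : p ≤ q) (hq : q < 1) :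
    2 * (q - p) ^ 2 ≤ bernoulliKL p q := by
  have hp1 : p < 1 := hpq.trans_lt hq
  have hderiv (u) (hu : u ∈ Icc p q) : HasDerivAt (fun u ↦ bernoulliKL p u - 2 * (u - p) ^ 2)
      ((u - p) / (u * (1 - u)) - 4 * (u - p)) u := by
    convert! (hasDerivAt_bernoulliKL ⟨hp, hp1⟩ ⟨hp.trans_le hu.1, hu.2.trans_lt hq⟩).sub
      ((((hasDerivAt_id u).sub_const p).pow 2).const_mul 2) using 1
    simp only [id]
    ring
  have hderiv_nonneg (u) (hu : u ∈ Icc p q) : 0 ≤ (u - p) / (u * (1 - u)) - 4 * (u - p) := by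
    have hvar : 0 < u * (1 - u) := mul_pos (hp.trans_le hu.1) (sub_pos.2 (hu.2.trans_lt hq))
    rw [sub_nonneg, le_div_iff₀ hvar]
    nlinarith [mul_nonneg (sub_nonneg.2 hu.1) (sq_nonneg (2 * u - 1))]
  have hmono : MonotoneOn (fun u ↦ bernoulliKL p u - 2 * (u - p) ^ 2) (Icc p q) := by
    refine monotoneOn_of_hasDerivWithinAt_nonneg (convex_Icc p q)
      (fun u hu ↦ (hderiv u hu).continuousAt.continuousWithinAt)
      (fun u hu ↦ (hderiv u (interior_subset hu)).hasDerivWithinAt)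
      (fun u hu ↦ hderiv_nonneg u (interior_subset hu))
  have hle := hmono (left_mem_Icc.2 hpq) (right_mem_Icc.2 hpq) hpq
  simpa [bernoulliKL, hp.ne', (sub_pos.2 hp1).ne'] using hle

/-- The affine function of `x` that takes the values `(1 - p) / (1 - q)` at `0` and `p / q` at `1`,
the likelihood ratios of the Bernoulli distributions of parameters `p` and `q`. These are the
weights in the Chernoff bound for Dirichlet means. -/
def likelihoodRatio (p q x : ℝ) : ℝ :=
  (1 - x) * ((1 - p) / (1 - q)) + x * (p / q)

lemma likelihoodRatio_pos {p q x : ℝ} (hp : p ∈ Ioo 0 1) (hq : q ∈ Ioo 0 1) (hx : x ∈ Icc 0 1) :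
    0 < likelihoodRatio p q x :=
  convex_Ioi (0 : ℝ) (div_pos (sub_pos.2 hp.2) (sub_pos.2 hq.2)) (div_pos hp.1 hq.1)
    (sub_nonneg.2 hx.2) hx.1 (sub_add_cancel 1 x)

lemma likelihoodRatio_self {p q : ℝ} (hq : q ∈ Ioo 0 1) : likelihoodRatio p q q = 1 := by
  have hq0 : q ≠ 0 := hq.1.ne'
  have hq1 : 1 - q ≠ 0 := (sub_pos.2 hq.2).ne'
  rw [likelihoodRatio, mul_div_cancel₀ _ hq1, mul_div_cancel₀ _ hq0, sub_add_cancel]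

lemma antitone_likelihoodRatio {p q : ℝ} (hq : q ∈ Ioo 0 1) (hpq : p ≤ q) :
    Antitone (likelihoodRatio p q) := by
  have hratio : p / q ≤ (1 - p) / (1 - q) :=
    ((div_le_one hq.1).2 hpq).trans ((one_le_div (sub_pos.2 hq.2)).2 (by linarith))
  intro x y hxy
  unfold likelihoodRatio
  nlinarith [mul_le_mul_of_nonneg_left hratio (sub_nonneg.2 hxy)]

lemma mul_log_add_mul_log_le_log_likelihoodRatio {p q x : ℝ} (hp : p ∈ Ioo 0 1)
    (hq : q ∈ Ioo 0 1) (hx : x ∈ Icc 0 1) :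
    (1 - x) * log ((1 - p) / (1 - q)) + x * log (p / q) ≤ log (likelihoodRatio p q x) :=
  strictConcaveOn_log_Ioi.concaveOn.2 (div_pos (sub_pos.2 hp.2) (sub_pos.2 hq.2))
    (div_pos hp.1 hq.1) (sub_nonneg.2 hx.2) hx.1 (sub_add_cancel 1 x)

variable {ι : Type*} [Fintype ι] {g : ι → ℝ} {p q : ℝ}

lemma sum_likelihoodRatio_mul {w : ι → ℝ} (hw : ∑ i, w i = 1) :
    ∑ i, likelihoodRatio p q (g i) * w i = likelihoodRatio p q (∑ i, w i * g i) := by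
  calc ∑ i, likelihoodRatio p q (g i) * w i
      = (∑ i, w i - ∑ i, w i * g i) * ((1 - p) / (1 - q)) + (∑ i, w i * g i) * (p / q) := by
        simp only [likelihoodRatio, ← Finset.sum_sub_distrib, Finset.sum_mul,
          ← Finset.sum_add_distrib]
        exact Finset.sum_congr rfl fun i _ ↦ by ring
    _ = likelihoodRatio p q (∑ i, w i * g i) := by rw [hw, likelihoodRatio]

lemma sum_mul_bernoulliKL_le {α : ι → ℝ} (hα : ∀ i, 0 ≤ α i) (hg : ∀ i, g i ∈ Icc 0 1)
    (hmean : ∑ i, α i * g i = (∑ i, α i) * p) (hp : p ∈ Ioo 0 1) (hq : q ∈ Ioo 0 1) :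
    (∑ i, α i) * bernoulliKL p q ≤ ∑ i, α i * log (likelihoodRatio p q (g i)) := by
  calc (∑ i, α i) * bernoulliKL p q
      = (∑ i, α i - ∑ i, α i * g i) * log ((1 - p) / (1 - q)) +
          (∑ i, α i * g i) * log (p / q) := by
        rw [hmean, bernoulliKL]
        ring
    _ = ∑ i, α i * ((1 - g i) * log ((1 - p) / (1 - q)) + g i * log (p / q)) := by
        simp only [← Finset.sum_sub_distrib, Finset.sum_mul, ← Finset.sum_add_distrib]
        exact Finset.sum_congr rfl fun i _ ↦ by ring
    _ ≤ ∑ i, α i * log (likelihoodRatio p q (g i)) :=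
        Finset.sum_le_sum fun i _ ↦ mul_le_mul_of_nonneg_left
          (mul_log_add_mul_log_le_log_likelihoodRatio hp hq (hg i)) (hα i)

end BernoulliKL

section Hoeffding

variable {m : ℕ} {α g : Fin (m + 1) → ℝ}

lemma dirichlet_le_exp_neg_bernoulliKL (hα : ∀ i, 0 < α i) (hg : ∀ i, g i ∈ Icc 0 1) {p q : ℝ}
    (hmean : ∑ i, α i * g i = (∑ i, α i) * p) (hp : 0 < p) (hpq : p ≤ q) (hq : q < 1) :
    dirichlet m α {w | q ≤ ∑ i, w i * g i} ≤
      ENNReal.ofReal (exp (-((∑ i, α i) * bernoulliKL p q))) := by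
  have hp_mem : p ∈ Ioo 0 1 := ⟨hp, hpq.trans_lt hq⟩
  have hq_mem : q ∈ Ioo 0 1 := ⟨hp.trans_le hpq, hq⟩
  let a : Fin (m + 1) → ℝ := fun i ↦ likelihoodRatio p q (g i)
  have ha (i) : 0 < a i := likelihoodRatio_pos hp_mem hq_mem (hg i)
  calc dirichlet m α {w | q ≤ ∑ i, w i * g i} ≤ dirichlet m α {w | ∑ i, a i * w i ≤ 1} := by
        refine measure_mono_ae (ae_mem_stdSimplex_dirichlet.mono fun w hw hqw ↦ ?_)
        change ∑ i, a i * w i ≤ 1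
        rw [sum_likelihoodRatio_mul hw.2, ← likelihoodRatio_self hq_mem]
        exact antitone_likelihoodRatio hq_mem hpq hqw
    _ ≤ ENNReal.ofReal (∏ i, a i ^ (-α i)) := dirichlet_sum_mul_le_one_le hα ha
    _ = ENNReal.ofReal (exp (-∑ i, α i * log (a i))) := by
        simp_rw [rpow_def_of_pos (ha _), ← exp_sum, mul_neg, Finset.sum_neg_distrib, mul_comm]
    _ ≤ ENNReal.ofReal (exp (-((∑ i, α i) * bernoulliKL p q))) := by
        gcongr
        exact sum_mul_bernoulliKL_le (fun i ↦ (hα i).le) hg hmean hp_mem hq_mem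

lemma dirichlet_hoeffding_of_mem_Ioo (hα : ∀ i, 0 < α i) {b c : ℝ} (hg : ∀ i, g i ∈ Icc b c)
    {p q : ℝ} (hmean : ∑ i, α i * g i = (∑ i, α i) * p) (hp : b < p) (hpq : p ≤ q) (hq : q < c) :
    dirichlet m α {w | q ≤ ∑ i, w i * g i} ≤
      ENNReal.ofReal (exp (-(2 * (∑ i, α i) * (q - p) ^ 2 / (c - b) ^ 2))) := by
  have hbc : 0 < c - b := by linarith
  have hN : 0 ≤ ∑ i, α i := Finset.sum_nonneg fun i _ ↦ (hα i).le
  have hsum_rescale (w : Fin (m + 1) → ℝ) :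
      ∑ i, w i * ((g i - b) / (c - b)) = (∑ i, w i * g i - (∑ i, w i) * b) / (c - b) := by
    simp only [mul_div_assoc', mul_sub, ← Finset.sum_div, Finset.sum_sub_distrib, Finset.sum_mul]
  have hchernoff := dirichlet_le_exp_neg_bernoulliKL hα (g := fun i ↦ (g i - b) / (c - b))
    (p := (p - b) / (c - b)) (q := (q - b) / (c - b))
    (fun i ↦ ⟨div_nonneg (sub_nonneg.2 (hg i).1) hbc.le,
      (div_le_one hbc).2 (sub_le_sub_right (hg i).2 b)⟩)
    (by rw [hsum_rescale, hmean, ← mul_sub, mul_div_assoc]) (div_pos (sub_pos.2 hp) hbc)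
    (by gcongr) ((div_lt_one hbc).2 (by linarith))
  calc dirichlet m α {w | q ≤ ∑ i, w i * g i}
      ≤ dirichlet m α {w | (q - b) / (c - b) ≤ ∑ i, w i * ((g i - b) / (c - b))} := by
        refine measure_mono_ae (ae_mem_stdSimplex_dirichlet.mono fun w hw hqw ↦ ?_)
        change _ ≤ ∑ i, w i * ((g i - b) / (c - b))
        rw [hsum_rescale, hw.2, one_mul]
        gcongr
        exact hqw
    _ ≤ _ := hchernoff
    _ ≤ ENNReal.ofReal (exp (-(2 * (∑ i, α i) * (q - p) ^ 2 / (c - b) ^ 2))) := by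
        have hpinsker := two_mul_sq_sub_le_bernoulliKL (div_pos (sub_pos.2 hp) hbc)
          (q := (q - b) / (c - b)) (by gcongr) ((div_lt_one hbc).2 (by linarith))
        gcongr
        calc 2 * (∑ i, α i) * (q - p) ^ 2 / (c - b) ^ 2
            = (∑ i, α i) * (2 * ((q - b) / (c - b) - (p - b) / (c - b)) ^ 2) := by
              rw [← sub_div, sub_sub_sub_cancel_right, div_pow]
              ring
          _ ≤ _ := mul_le_mul_of_nonneg_left hpinsker hN

theorem dirichlet_hoeffding (hα : ∀ i, 0 < α i) {b c : ℝ} (hbc : b < c)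
    (hg : ∀ i, g i ∈ Icc b c) {t : ℝ} (ht : 0 ≤ t) :
    dirichlet m α {w | (∑ i, α i * g i) / (∑ i, α i) + t ≤ ∑ i, w i * g i} ≤
      ENNReal.ofReal (exp (-(2 * (∑ i, α i) * t ^ 2 / (c - b) ^ 2))) := by
  set p := (∑ i, α i * g i) / (∑ i, α i) with hp_def
  have hN : 0 < ∑ i, α i := Finset.sum_pos (fun i _ ↦ hα i) Finset.univ_nonempty
  have hmean : ∑ i, α i * g i = (∑ i, α i) * p := by rw [hp_def, mul_div_cancel₀ _ hN.ne']
  have hbp : b ≤ p := by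
    rw [hp_def, le_div_iff₀ hN, mul_comm, Finset.sum_mul]
    exact Finset.sum_le_sum fun i _ ↦ mul_le_mul_of_nonneg_left (hg i).1 (hα i).le
  rcases le_or_gt (p + t) c with hptc | hcpt
  · -- Widening `[b, c]` by `η` puts the mean and the threshold in its interior, where the Bernoulli
    -- divergence is finite.
    have henlarged (η : ℝ) (hη : 0 < η) : dirichlet m α {w | p + t ≤ ∑ i, w i * g i} ≤
        ENNReal.ofReal (exp (-(2 * (∑ i, α i) * t ^ 2 / (c + η - (b - η)) ^ 2))) := by
      simpa using dirichlet_hoeffding_of_mem_Ioo hα (b := b - η) (c := c + η)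
        (fun i ↦ ⟨by linarith [(hg i).1], by linarith [(hg i).2]⟩) hmean (by linarith)
        (le_add_of_nonneg_right ht) (by linarith)
    have hcont : ContinuousAt (fun η : ℝ ↦
        ENNReal.ofReal (exp (-(2 * (∑ i, α i) * t ^ 2 / (c + η - (b - η)) ^ 2)))) 0 := by
      have hne : (c + 0 - (b - 0)) ^ 2 ≠ 0 := by simpa using (sub_pos.2 hbc).ne'
      exact ENNReal.continuous_ofReal.continuousAt.comp (by fun_prop (disch := exact hne))
    have hlim := hcont.tendsto.mono_left (nhdsWithin_le_nhds (s := Ioi 0))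
    simp only [add_zero, sub_zero] at hlim
    exact ge_of_tendsto hlim (eventually_mem_nhdsWithin.mono henlarged)
  · have hnull : dirichlet m α {w | p + t ≤ ∑ i, w i * g i} = 0 := by
      refine measure_mono_null_ae (t := ∅) ?_ measure_empty
      filter_upwards [ae_mem_stdSimplex_dirichlet] with w hw hle
      have hle_c : ∑ i, w i * g i ≤ ∑ i, w i * c :=
        Finset.sum_le_sum fun i _ ↦ mul_le_mul_of_nonneg_left (hg i).2 (hw.1 i)
      rw [← Finset.sum_mul, hw.2, one_mul] at hle_c
      exact absurd (hle.trans hle_c) hcpt.not_ge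
    rw [hnull]
    exact bot_le

end Hoeffding

section PosteriorMean

/-- The parameter `(γ, 1, …, 1, γ)` of the Bayesian bootstrap weights that the Dirichlet process
posterior `DP(γδ_{x₀} + γδ_{x₁} + n · empirical)` puts on `x₀`, the `n` observations and `x₁`. -/
def posteriorParam (n : ℕ) (γ : ℝ) : Fin (n + 2) → ℝ :=
  fun i ↦ if i = 0 then γ else if i = Fin.last (n + 1) then γ else 1

variable {n : ℕ} {γ : ℝ}

lemma posteriorParam_pos (hγ : 0 < γ) (i : Fin (n + 2)) : 0 < posteriorParam n γ i := by
  unfold posteriorParam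
  split_ifs <;> first | exact hγ | exact one_pos

lemma sum_posteriorParam_mul (f : Fin (n + 2) → ℝ) :
    ∑ i, posteriorParam n γ i * f i =
      γ * (f 0 + f (Fin.last (n + 1))) + ∑ i : Fin n, f i.castSucc.succ := by
  have hne (i : Fin n) : i.castSucc.succ ≠ Fin.last (n + 1) := by
    rw [Fin.succ_castSucc]
    exact Fin.castSucc_ne_last _
  simp only [Fin.sum_univ_succ (n := n + 1), Fin.sum_univ_castSucc (n := n), posteriorParam,
    Fin.succ_last, Fin.succ_ne_zero, hne, if_true, if_false, one_mul, Nat.succ_eq_add_one]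
  ring

lemma sum_posteriorParam : ∑ i, posteriorParam n γ i = n + 2 * γ := by
  have h := sum_posteriorParam_mul (n := n) (γ := γ) fun _ ↦ 1
  simp only [mul_one, Finset.sum_const, Finset.card_univ, Fintype.card_fin, nsmul_eq_mul] at h
  linarith

lemma posteriorMean_le (hn : 1 ≤ n) (hγ : 0 < γ) {g : Fin (n + 2) → ℝ}
    (hg : ∀ i, 0 ≤ g i) (hg01 : g 0 + g (Fin.last (n + 1)) ≤ 1) :
    (∑ i, posteriorParam n γ i * g i) / (n + 2 * γ) ≤
      γ / (n + 2 * γ) + (1 / n) * ∑ i : Fin n, g i.castSucc.succ := by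
  have hn0 : (0 : ℝ) < n := by exact_mod_cast hn
  have hS : 0 ≤ ∑ i : Fin n, g i.castSucc.succ := Finset.sum_nonneg fun i _ ↦ hg _
  rw [sum_posteriorParam_mul, add_div, one_div_mul_eq_div]
  exact add_le_add
    (div_le_div_of_nonneg_right (mul_le_of_le_one_right hγ.le hg01) (by positivity))
    (div_le_div_of_nonneg_left hS hn0 (by linarith))

theorem dirichlet_process_hoeffding_general (hn : 1 ≤ n) (hγ : 0 < γ) {g : Fin (n + 2) → ℝ}
    (hg : ∀ i, g i ∈ Icc 0 1) (hg01 : g 0 + g (Fin.last (n + 1)) ≤ 1) {δ : ℝ}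
    (hδ : δ ∈ Ioo 0 1) :
    dirichlet (n + 1) (posteriorParam n γ)
        {w | √(log (1 / δ) / (2 * (n + 2 * γ))) + γ / (n + 2 * γ) ≤
          ∑ i, w i * g i - (1 / n) * ∑ i : Fin n, g i.castSucc.succ} ≤
      ENNReal.ofReal δ := by
  set t := √(log (1 / δ) / (2 * (n + 2 * γ))) with ht
  have hlog : 0 ≤ log (1 / δ) := log_nonneg (one_le_one_div hδ.1 hδ.2.le)
  have hrate : exp (-(2 * (n + 2 * γ) * t ^ 2 / (1 - 0) ^ 2)) = δ := by
    rw [ht, sq_sqrt (by positivity), mul_div_cancel₀ _ (by positivity), sub_zero, one_pow, div_one,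
      one_div, log_inv, neg_neg, exp_log hδ.1]
  have hmean := posteriorMean_le hn hγ (fun i ↦ (hg i).1) hg01
  calc dirichlet (n + 1) (posteriorParam n γ)
        {w | t + γ / (n + 2 * γ) ≤ ∑ i, w i * g i - (1 / n) * ∑ i : Fin n, g i.castSucc.succ}
      ≤ dirichlet (n + 1) (posteriorParam n γ)
          {w | (∑ i, posteriorParam n γ i * g i) / (n + 2 * γ) + t ≤ ∑ i, w i * g i} :=
        measure_mono <| ofPred_subset_ofPred.2 fun w hw ↦ by linarith
    _ ≤ ENNReal.ofReal δ := by
        have h := dirichlet_hoeffding (posteriorParam_pos (n := n) hγ) one_pos hg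
          (sqrt_nonneg _ : 0 ≤ t)
        rw [sum_posteriorParam] at h
        exact h.trans_eq (congrArg _ hrate)

lemma sqrt_log_div_add_div_le {M N x y γ : ℝ} (hM : 0 < M) (hMN : M ≤ N) (hx : 1 ≤ x)
    (hxy : x ≤ y) (hγ : 0 ≤ γ) :
    √(log x / (2 * N)) + γ / N ≤ √(log y / (2 * M)) + γ / M := by
  have hlog : 0 ≤ log y := log_nonneg (hx.trans hxy)
  gcongr

end PosteriorMean

/-- **Hoeffding-type inequality for the Dirichlet process posterior mean**
(conditional form, via Bayesian bootstrap weights `w ∼ Dir(γ, 1, …, 1, γ)`). -/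
theorem dirichlet_process_hoeffding
    (n : ℕ) (hn : 1 ≤ n) (ε γ : ℝ) (hε : ε ∈ Set.Ioo (0 : ℝ) 1)
    (hγ : c0 / ε ^ 2 + 1 ≤ γ)
    (g : Fin (n + 2) → ℝ) (hg : ∀ i, g i ∈ Set.Icc (0 : ℝ) 1)
    (hg0 : g 0 = 0) (hgl : g (Fin.last (n + 1)) = 1)
    (δ : ℝ) (hδ : δ ∈ Set.Ioo (0 : ℝ) 1) :
    dirichlet (n + 1) (fun i => if i = 0 then γ else if i = Fin.last (n + 1) then γ else 1)
        {w | Real.sqrt (Real.log ((1 + ε) / δ) / (2 * (n + 2 * γ - 1))) + γ / (n + 2 * γ - 1)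
              ≤ (∑ i, w i * g i) - (1 / n) * ∑ i : Fin n, g i.castSucc.succ}
      ≤ ENNReal.ofReal δ := by
  have hγ0 : 0 < γ := (by unfold c0; positivity : 0 < c0 / ε ^ 2 + 1).trans_le hγ
  have hn1 : (1 : ℝ) ≤ n := by exact_mod_cast hn
  have hthreshold := sqrt_log_div_add_div_le (M := n + 2 * γ - 1) (N := n + 2 * γ)
    (by linarith) (by linarith) (one_le_one_div hδ.1 hδ.2.le)
    (div_le_div_of_nonneg_right (by linarith [hε.1] : 1 ≤ 1 + ε) hδ.1.le) hγ0.le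
  exact (measure_mono fun w hw ↦ hthreshold.trans hw).trans <|
    dirichlet_process_hoeffding_general hn hγ0 hg (by rw [hg0, hgl, zero_add]) hδ

end
end

section
/- Stability of Kinf under a shift of the underlying distribution: Let m ≥ 1, b > 0, and let f : {0,…,m} → [0,b] satisfy f(0) = 0 and f(m) = b. Let α, β ∈ ℝ_{≥0}^{m+1} with β_m + α_m ≥ 1, and set ᾱ = Σ_{i=0}^m α_i > 0 and β̄ = Σ_{i=0}^m β_i. For a nonzero vector s ∈ ℝ_{≥0}^{m+1}, write p̄_s(i) = s_i / (Σ_{j=0}^m s_j). Then for every μ ∈ (0, b): Kinf(p̄_α, μ, f) − (3β̄/ᾱ)·log( b(ᾱ + β̄)/(b − μ) ) ≤ Kinf(p̄_{α+β}, μ, f) ≤ ( ᾱ·Kinf(p̄_α, μ, f) + β̄·log( b/(b − μ) ) ) / (ᾱ + β̄). -/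
open Real Set

noncomputable section

/-!
**Upper bound.** `Kinf · μ f` is convex, `KL` being jointly convex, and the law of `α + β` is the
mixture of the laws of `α` and `β` with weights `A / (A + B)` and `B / (A + B)`, where `A` and `B`
are the total masses. Moving a fraction `μ / b` of a law to the maximiser of `f` makes its mean
at least `μ`, so `Kinf` never exceeds `log (b / (b - μ))`.

**Lower bound.** Let `p` be the law of `α + β`, and `l` the maximiser of `f`. Any competitor `q`
can be capped at `p / p l` and its excess mass sent to `l`: neither the divergence from `p`
increases nor the mean decreases. As `1 ≤ α l + β l`, the capped law `r` satisfies `r ≤ α + β`,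
hence `∑ α log (α / r) ≤ ∑ (α + β) log ((α + β) / r)`, which after normalization reads
`A Kinf α ≤ (A + B) Kinf (α + β) + B (log (A + B) + 1)`.
The additive `B` is absorbed into the logarithm `L` of the claim unless `L < 1 / 2`; but then either
`A ≤ B`, where `Kinf α ≤ L` is enough, or the mean of `α` is already at least `μ`.
-/

lemma mul_log_add_sub_le_mul_log_div {a y c : ℝ} (ha : 0 ≤ a) (hy : 0 ≤ y)
    (hya : y = 0 → a = 0) (hc : 0 < c) :
    a * log c + a - c * y ≤ a * log (a / y) := by
  rcases ha.eq_or_lt with rfl | ha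
  · simpa using mul_nonneg hc.le hy
  have hy : 0 < y := hy.lt_of_ne fun h => ha.ne' (hya h.symm)
  have hlog : 1 - (a / y / c)⁻¹ ≤ log (a / y) - log c := by
    rw [← log_div (by positivity) hc.ne']
    exact one_sub_inv_le_log_of_pos (by positivity)
  calc a * log c + a - c * y = a * (log c + (1 - (a / y / c)⁻¹)) := by field_simp; ring
    _ ≤ a * log (a / y) := by gcongr; linarith

lemma add_mul_log_div_add_le {a y a' y' : ℝ} (ha : 0 ≤ a) (hy : 0 ≤ y) (hya : y = 0 → a = 0)
    (ha' : 0 ≤ a') (hy' : 0 ≤ y') (hya' : y' = 0 → a' = 0) :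
    (a + a') * log ((a + a') / (y + y')) ≤ a * log (a / y) + a' * log (a' / y') := by
  rcases (add_nonneg hy hy').eq_or_lt with h0 | hpos
  · simp [hya (by linarith), hya' (by linarith)]
  rcases (add_nonneg ha ha').eq_or_lt with h0 | hpos'
  · simp [show a = 0 by linarith, show a' = 0 by linarith]
  set c := (a + a') / (y + y')
  have hcy : c * (y + y') = a + a' := div_mul_cancel₀ _ hpos.ne'
  have hc0 : 0 < c := by positivity
  linarith [mul_log_add_sub_le_mul_log_div ha hy hya hc0,
    mul_log_add_sub_le_mul_log_div ha' hy' hya' hc0]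

section Divergence

variable {m : ℕ} {p p' q q' r : Fin (m + 1) → ℝ} {c : ℝ}

lemma klReal_eq_sum (p q : Fin (m + 1) → ℝ) : klReal p q = ∑ i, p i * log (p i / q i) :=
  Finset.sum_congr rfl fun i _ => by split_ifs with h <;> simp [h]

lemma klReal_self (p : Fin (m + 1) → ℝ) : klReal p p = 0 := by
  rw [klReal_eq_sum]
  refine Finset.sum_eq_zero fun i _ => ?_
  rcases eq_or_ne (p i) 0 with h | h <;> simp [h]

lemma klReal_smul_smul (c : ℝ) (p q : Fin (m + 1) → ℝ) :
    klReal (c • p) (c • q) = c * klReal p q := by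
  rcases eq_or_ne c 0 with rfl | hc
  · simp [klReal_eq_sum]
  · simp [klReal_eq_sum, Finset.mul_sum, mul_assoc, mul_div_mul_left _ _ hc]

lemma klReal_add_add_le (hp : 0 ≤ p) (hq : 0 ≤ q) (hqp : ∀ i, q i = 0 → p i = 0)
    (hp' : 0 ≤ p') (hq' : 0 ≤ q') (hqp' : ∀ i, q' i = 0 → p' i = 0) :
    klReal (p + p') (q + q') ≤ klReal p q + klReal p' q' := by
  simp only [klReal_eq_sum, ← Finset.sum_add_distrib]
  exact Finset.sum_le_sum fun i _ =>
    add_mul_log_div_add_le (hp i) (hq i) (hqp i) (hp' i) (hq' i) (hqp' i)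

lemma klReal_smul_add_smul_le {u v : ℝ} (hp : 0 ≤ p) (hq : 0 ≤ q)
    (hqp : ∀ i, q i = 0 → p i = 0) (hp' : 0 ≤ p') (hq' : 0 ≤ q')
    (hqp' : ∀ i, q' i = 0 → p' i = 0) (hu : 0 ≤ u) (hv : 0 ≤ v) :
    klReal (u • p + v • p') (u • q + v • q') ≤ u * klReal p q + v * klReal p' q' := by
  rw [← klReal_smul_smul, ← klReal_smul_smul]
  refine klReal_add_add_le (smul_nonneg hu hp) (smul_nonneg hu hq) (fun i hi => ?_)
    (smul_nonneg hv hp') (smul_nonneg hv hq') (fun i hi => ?_)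
  · simpa using (mul_eq_zero.1 hi).imp_right (hqp i)
  · simpa using (mul_eq_zero.1 hi).imp_right (hqp' i)

lemma sum_sub_sum_le_klReal (hp : 0 ≤ p) (hq : 0 ≤ q) (hqp : ∀ i, q i = 0 → p i = 0) :
    ∑ i, p i - ∑ i, q i ≤ klReal p q := by
  rw [klReal_eq_sum, ← Finset.sum_sub_distrib]
  refine Finset.sum_le_sum fun i _ => ?_
  simpa using mul_log_add_sub_le_mul_log_div (hp i) (hq i) (hqp i) one_pos

lemma klReal_mono_left (hp : 0 ≤ p) (hpp' : p ≤ p') (hr : 0 ≤ r) (hrp' : r ≤ p') :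
    klReal p r ≤ klReal p' r := by
  simp only [klReal_eq_sum]
  refine Finset.sum_le_sum fun i _ => ?_
  rcases (hr i).eq_or_lt with h0 | hri
  · simp [← h0]
  replace hri : 0 < r i := hri
  have hlog : 0 ≤ log (p' i / r i) := log_nonneg ((one_le_div hri).2 (hrp' i))
  rcases (hp i).eq_or_lt with h0 | hpi
  · simpa [← h0] using mul_nonneg ((hp i).trans (hpp' i)) hlog
  replace hpi : 0 < p i := hpi
  have hpi' : p i ≤ p' i := hpp' i
  calc p i * log (p i / r i) ≤ p i * log (p' i / r i) := by gcongr
    _ ≤ p' i * log (p' i / r i) := by gcongr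

lemma klReal_le_sum_mul_log_inv (hp : 0 ≤ p) (hc : 0 < c) (hcpq : c • p ≤ q) :
    klReal p q ≤ (∑ i, p i) * log c⁻¹ := by
  rw [klReal_eq_sum, Finset.sum_mul]
  refine Finset.sum_le_sum fun i _ => ?_
  rcases (hp i).eq_or_lt with h0 | hpi
  · simp [← h0]
  replace hpi : 0 < p i := hpi
  have hcp : c * p i ≤ q i := hcpq i
  have hqi : 0 < q i := (mul_pos hc hpi).trans_le hcp
  gcongr
  rwa [div_le_iff₀ hqi, ← div_eq_inv_mul, le_div_iff₀' hc]

/-- First-order criterion: passing from `q` to `r` moves mass from points where `p / r ≤ c` to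
points where `p / r ≥ c`. -/
lemma klReal_le_klReal_of_mul_nonpos (hp : 0 ≤ p) (hq : 0 ≤ q) (hr : 0 ≤ r)
    (hqp : ∀ i, q i = 0 → p i = 0) (hrp : ∀ i, r i = 0 → p i = 0)
    (hsum : ∑ i, q i = ∑ i, r i) (hc : 0 ≤ c)
    (hmove : ∀ i, (q i - r i) * (p i - c * r i) ≤ 0) : klReal p r ≤ klReal p q := by
  have hterm (i) : p i * log (p i / r i) ≤ p i * log (p i / q i) + c * (q i - r i) := by
    rcases (hr i).eq_or_lt with h0 | hri
    · simpa [hrp i h0.symm, ← h0] using mul_nonneg hc (hq i)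
    replace hri : 0 < r i := hri
    have hfirst : (p i / r i - c) * (q i - r i) ≤ 0 := by
      rw [div_sub' hri.ne', div_mul_eq_mul_div]
      exact div_nonpos_of_nonpos_of_nonneg (by linarith [hmove i]) hri.le
    rcases (hp i).eq_or_lt with h0 | hpi
    · simp only [← h0, Pi.zero_apply, zero_div, zero_sub, zero_mul, zero_add] at hfirst ⊢
      linarith
    have htangent := mul_log_add_sub_le_mul_log_div (hp i) (hq i) (hqp i) (div_pos hpi hri)
    linarith [div_mul_cancel₀ (p i) hri.ne']
  simp only [klReal_eq_sum]
  calc ∑ i, p i * log (p i / r i)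
      ≤ ∑ i, (p i * log (p i / q i) + c * (q i - r i)) := Finset.sum_le_sum fun i _ => hterm i
    _ = ∑ i, p i * log (p i / q i) := by
      rw [Finset.sum_add_distrib, ← Finset.mul_sum, Finset.sum_sub_distrib, hsum]
      ring

end Divergence

/-- The competitors `q` in the infimum defining `Kinf p μ f`. -/
def kinfFeasible {m : ℕ} (p : Fin (m + 1) → ℝ) (μ : ℝ) (f : Fin (m + 1) → ℝ) :
    Set (Fin (m + 1) → ℝ) :=
  {q ∈ stdSimplex ℝ (Fin (m + 1)) | (∀ i, q i = 0 → p i = 0) ∧ μ ≤ f ⬝ᵥ q}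

section Kinf

variable {m : ℕ} {p q f : Fin (m + 1) → ℝ} {μ x : ℝ} {l : Fin (m + 1)}

lemma Kinf_eq_sInf_image (p : Fin (m + 1) → ℝ) (μ : ℝ) (f : Fin (m + 1) → ℝ) :
    Kinf p μ f = sInf (klReal p '' kinfFeasible p μ f) := by
  simp only [Kinf, kinfFeasible, dotProduct, image, mem_ofPred_eq, and_assoc, eq_comm]

lemma klReal_nonneg_of_mem_kinfFeasible (hp : p ∈ stdSimplex ℝ (Fin (m + 1)))
    (hq : q ∈ kinfFeasible p μ f) : 0 ≤ klReal p q := by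
  simpa [hp.2, hq.1.2] using sum_sub_sum_le_klReal hp.1 hq.1.1 hq.2.1

lemma Kinf_nonneg (hp : p ∈ stdSimplex ℝ (Fin (m + 1))) : 0 ≤ Kinf p μ f := by
  rw [Kinf_eq_sInf_image]
  exact Real.sInf_nonneg (forall_mem_image.2 fun _ => klReal_nonneg_of_mem_kinfFeasible hp)

lemma Kinf_le_klReal (hp : p ∈ stdSimplex ℝ (Fin (m + 1))) (hq : q ∈ kinfFeasible p μ f) :
    Kinf p μ f ≤ klReal p q := by
  rw [Kinf_eq_sInf_image]
  exact csInf_le ⟨0, forall_mem_image.2 fun _ => klReal_nonneg_of_mem_kinfFeasible hp⟩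
    (mem_image_of_mem _ hq)

lemma Kinf_eq_zero_of_le_dotProduct (hp : p ∈ stdSimplex ℝ (Fin (m + 1))) (hμ : μ ≤ f ⬝ᵥ p) :
    Kinf p μ f = 0 :=
  ((Kinf_le_klReal hp ⟨hp, fun _ => id, hμ⟩).trans_eq (klReal_self p)).antisymm (Kinf_nonneg hp)

lemma mix_single_mem_kinfFeasible (hp : p ∈ stdSimplex ℝ (Fin (m + 1))) (hf : 0 ≤ f)
    (hx : x ∈ Ico 0 1) (hμ : μ ≤ x * f l) :
    (1 - x) • p + x • Pi.single l 1 ∈ kinfFeasible p μ f := by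
  have hx' : 0 < 1 - x := sub_pos.2 hx.2
  refine ⟨convex_stdSimplex ℝ _ hp (single_mem_stdSimplex ℝ l) hx'.le hx.1 (by ring),
    fun i hi => ?_, ?_⟩
  · have hsingle : 0 ≤ x * Pi.single (M := fun _ => ℝ) l 1 i :=
      mul_nonneg hx.1 ((single_mem_stdSimplex ℝ l).1 i)
    have hscaled : 0 ≤ (1 - x) * p i := mul_nonneg hx'.le (hp.1 i)
    simp only [Pi.add_apply, Pi.smul_apply, smul_eq_mul] at hi
    exact (mul_eq_zero.1 (by linarith)).resolve_left hx'.ne'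
  · have : 0 ≤ (1 - x) * f ⬝ᵥ p := mul_nonneg hx'.le (dotProduct_nonneg_of_nonneg hf hp.1)
    simp only [dotProduct_add, dotProduct_smul, dotProduct_single_one, smul_eq_mul]
    linarith

lemma exists_mem_kinfFeasible_klReal_le (hp : p ∈ stdSimplex ℝ (Fin (m + 1))) (hf : 0 ≤ f)
    (hμ : μ ∈ Ico 0 (f l)) :
    ∃ q ∈ kinfFeasible p μ f, klReal p q ≤ log (f l / (f l - μ)) := by
  have hfl : 0 < f l := hμ.1.trans_lt hμ.2
  have hx : μ / f l ∈ Ico 0 1 := ⟨div_nonneg hμ.1 hfl.le, (div_lt_one hfl).2 hμ.2⟩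
  refine ⟨_, mix_single_mem_kinfFeasible hp hf hx (div_mul_cancel₀ _ hfl.ne').ge, ?_⟩
  have hle : (1 - μ / f l) • p ≤ (1 - μ / f l) • p + (μ / f l) • Pi.single l 1 :=
    le_add_of_nonneg_right (smul_nonneg hx.1 (single_mem_stdSimplex ℝ l).1)
  refine (klReal_le_sum_mul_log_inv hp.1 (sub_pos.2 hx.2) hle).trans_eq ?_
  rw [hp.2, one_mul, one_sub_div hfl.ne', inv_div]

lemma kinfFeasible_nonempty (hp : p ∈ stdSimplex ℝ (Fin (m + 1))) (hf : 0 ≤ f)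
    (hμ : μ ∈ Ico 0 (f l)) : (kinfFeasible p μ f).Nonempty :=
  let ⟨q, hq, _⟩ := exists_mem_kinfFeasible_klReal_le hp hf hμ
  ⟨q, hq⟩

lemma Kinf_le_log (hp : p ∈ stdSimplex ℝ (Fin (m + 1))) (hf : 0 ≤ f) (hμ : μ ∈ Ico 0 (f l)) :
    Kinf p μ f ≤ log (f l / (f l - μ)) :=
  let ⟨_, hq, hle⟩ := exists_mem_kinfFeasible_klReal_le hp hf hμ
  (Kinf_le_klReal hp hq).trans hle

lemma exists_mem_kinfFeasible_klReal_lt (hne : (kinfFeasible p μ f).Nonempty) {ε : ℝ}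
    (hε : 0 < ε) : ∃ q ∈ kinfFeasible p μ f, klReal p q < Kinf p μ f + ε := by
  rw [Kinf_eq_sInf_image]
  simpa using Real.lt_sInf_add_pos (hne.image (klReal p)) hε

lemma smul_add_smul_mem_kinfFeasible {p' q' : Fin (m + 1) → ℝ} {u v : ℝ}
    (hq : q ∈ kinfFeasible p μ f) (hq' : q' ∈ kinfFeasible p' μ f)
    (hu : 0 ≤ u) (hv : 0 ≤ v) (huv : u + v = 1) :
    u • q + v • q' ∈ kinfFeasible (u • p + v • p') μ f := by
  refine ⟨convex_stdSimplex ℝ _ hq.1 hq'.1 hu hv huv, fun i hi => ?_, ?_⟩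
  · have hui : 0 ≤ u * q i := mul_nonneg hu (hq.1.1 i)
    have hvi : 0 ≤ v * q' i := mul_nonneg hv (hq'.1.1 i)
    simp only [Pi.add_apply, Pi.smul_apply, smul_eq_mul] at hi ⊢
    have hup : u * p i = 0 := by
      simpa using (mul_eq_zero.1 (by linarith : u * q i = 0)).imp_right (hq.2.1 i)
    have hvp : v * p' i = 0 := by
      simpa using (mul_eq_zero.1 (by linarith : v * q' i = 0)).imp_right (hq'.2.1 i)
    rw [hup, hvp, add_zero]
  · calc μ = u * μ + v * μ := by rw [← add_mul, huv, one_mul]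
      _ ≤ u * f ⬝ᵥ q + v * f ⬝ᵥ q' := by gcongr; exacts [hq.2.2, hq'.2.2]
      _ = f ⬝ᵥ (u • q + v • q') := by simp only [dotProduct_add, dotProduct_smul, smul_eq_mul]

lemma convexOn_Kinf (hf : 0 ≤ f) (hμ : μ ∈ Ico 0 (f l)) :
    ConvexOn ℝ (stdSimplex ℝ (Fin (m + 1))) fun p => Kinf p μ f := by
  refine ⟨convex_stdSimplex ℝ _, fun p hp p' hp' u v hu hv huv => ?_⟩
  refine le_of_forall_pos_le_add fun ε hε => ?_
  obtain ⟨q, hq, hlt⟩ := exists_mem_kinfFeasible_klReal_lt (kinfFeasible_nonempty hp hf hμ) hε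
  obtain ⟨q', hq', hlt'⟩ := exists_mem_kinfFeasible_klReal_lt (kinfFeasible_nonempty hp' hf hμ) hε
  calc Kinf (u • p + v • p') μ f
      ≤ klReal (u • p + v • p') (u • q + v • q') :=
        Kinf_le_klReal (convex_stdSimplex ℝ _ hp hp' hu hv huv)
          (smul_add_smul_mem_kinfFeasible hq hq' hu hv huv)
    _ ≤ u * klReal p q + v * klReal p' q' :=
        klReal_smul_add_smul_le hp.1 hq.1.1 hq.2.1 hp'.1 hq'.1.1 hq'.2.1 hu hv
    _ ≤ u * (Kinf p μ f + ε) + v * (Kinf p' μ f + ε) := by gcongr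
    _ = u • Kinf p μ f + v • Kinf p' μ f + ε := by
        simp only [smul_eq_mul]
        linear_combination ε * huv

end Kinf

/-- The distribution `q` capped at the density ratio `q / p ≤ 1 / p l`, the excess mass being moved
to the point `l`; the cap itself is inactive at `l` because `q l ≤ 1`. -/
def capAt {m : ℕ} (p : Fin (m + 1) → ℝ) (l : Fin (m + 1)) (q : Fin (m + 1) → ℝ) :
    Fin (m + 1) → ℝ :=
  q ⊓ (p l)⁻¹ • p + (1 - ∑ i, (q ⊓ (p l)⁻¹ • p) i) • Pi.single l 1

section CapAt

variable {m : ℕ} {p q f : Fin (m + 1) → ℝ} {μ : ℝ} {l i : Fin (m + 1)}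

lemma one_sub_sum_inf_nonneg (hq : q ∈ stdSimplex ℝ (Fin (m + 1))) (s : Fin (m + 1) → ℝ) :
    0 ≤ 1 - ∑ i, (q ⊓ s) i := by
  rw [sub_nonneg, ← hq.2]
  exact Finset.sum_le_sum fun i _ => (inf_le_left : q ⊓ s ≤ q) i

lemma inf_le_capAt (hq : q ∈ stdSimplex ℝ (Fin (m + 1))) : q ⊓ (p l)⁻¹ • p ≤ capAt p l q :=
  le_add_of_nonneg_right (smul_nonneg (one_sub_sum_inf_nonneg hq _) (single_mem_stdSimplex ℝ l).1)

lemma capAt_of_ne (hi : i ≠ l) : capAt p l q i = min (q i) ((p l)⁻¹ * p i) := by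
  simp [capAt, Pi.single_eq_of_ne hi]

lemma capAt_mem_stdSimplex (hp : 0 ≤ p) (hq : q ∈ stdSimplex ℝ (Fin (m + 1))) :
    capAt p l q ∈ stdSimplex ℝ (Fin (m + 1)) := by
  have hcap : 0 ≤ q ⊓ (p l)⁻¹ • p := le_inf hq.1 (smul_nonneg (inv_nonneg.2 (hp l)) hp)
  refine ⟨fun i => (hcap.trans (inf_le_capAt hq)) i, ?_⟩
  simp only [capAt, Pi.add_apply, Pi.smul_apply, smul_eq_mul, Finset.sum_add_distrib,
    ← Finset.mul_sum, Finset.sum_pi_single', Finset.mem_univ, if_true]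
  ring

lemma mul_capAt_le (hp : 0 ≤ p) (hpl : 0 < p l) (hq : q ∈ stdSimplex ℝ (Fin (m + 1))) :
    p l * capAt p l q i ≤ p i := by
  rcases eq_or_ne i l with rfl | hi
  · exact mul_le_of_le_one_right hpl.le
      (mem_Icc_of_mem_stdSimplex (capAt_mem_stdSimplex hp hq) i).2
  · rw [capAt_of_ne hi, ← le_inv_mul_iff₀ hpl]
    exact min_le_right _ _

lemma eq_zero_of_capAt_eq_zero (hp : 0 ≤ p) (hpl : 0 < p l)
    (hq : q ∈ stdSimplex ℝ (Fin (m + 1))) (hqp : ∀ i, q i = 0 → p i = 0)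
    (hi : capAt p l q i = 0) : p i = 0 := by
  by_contra hpi
  have hpi : 0 < p i := (hp i).lt_of_ne' hpi
  have hqi : 0 < q i := (hq.1 i).lt_of_ne' fun h => hpi.ne' (hqp i h)
  have hcap : 0 < min (q i) ((p l)⁻¹ * p i) := lt_min hqi (by positivity)
  exact (hcap.trans_le (inf_le_capAt hq i)).ne' hi

lemma dotProduct_le_dotProduct_capAt (hf : ∀ i, f i ≤ f l)
    (hq : q ∈ stdSimplex ℝ (Fin (m + 1))) : f ⬝ᵥ q ≤ f ⬝ᵥ capAt p l q := by
  set t := q ⊓ (p l)⁻¹ • p with ht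
  have hloss : f ⬝ᵥ (q - t) ≤ (fun _ => f l) ⬝ᵥ (q - t) :=
    dotProduct_le_dotProduct_of_nonneg_right hf (sub_nonneg.2 inf_le_left)
  have hexcess : (fun _ => f l) ⬝ᵥ (q - t) = (1 - ∑ i, t i) * f l := by
    simp only [dotProduct, Pi.sub_apply, ← Finset.mul_sum, Finset.sum_sub_distrib, hq.2]
    ring
  have hcap : f ⬝ᵥ capAt p l q = f ⬝ᵥ t + (1 - ∑ i, t i) * f l := by
    simp only [capAt, ← ht, dotProduct_add, dotProduct_smul, dotProduct_single_one, smul_eq_mul]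
  rw [dotProduct_sub] at hloss
  linarith

lemma klReal_capAt_le (hp : 0 ≤ p) (hpl : 0 < p l) (hq : q ∈ stdSimplex ℝ (Fin (m + 1)))
    (hqp : ∀ i, q i = 0 → p i = 0) : klReal p (capAt p l q) ≤ klReal p q := by
  have hr := capAt_mem_stdSimplex (l := l) hp hq
  refine klReal_le_klReal_of_mul_nonpos hp hq.1 hr.1 hqp
    (fun i => eq_zero_of_capAt_eq_zero hp hpl hq hqp) (hq.2.trans hr.2.symm) hpl.le fun i => ?_
  rcases eq_or_ne i l with rfl | hi
  · have hqi : q i ≤ 1 := (mem_Icc_of_mem_stdSimplex hq i).2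
    have hle := inf_le_capAt (p := p) (l := i) hq i
    simp only [Pi.inf_apply, Pi.smul_apply, smul_eq_mul, inv_mul_cancel₀ hpl.ne',
      inf_eq_left.2 hqi] at hle
    exact mul_nonpos_of_nonpos_of_nonneg (sub_nonpos.2 hle)
      (sub_nonneg.2 (mul_capAt_le hp hpl hq))
  · rw [capAt_of_ne hi]
    rcases min_choice (q i) ((p l)⁻¹ * p i) with h | h <;> simp [h, hpl.ne']

lemma capAt_mem_kinfFeasible (hf : ∀ i, f i ≤ f l) (hp : 0 ≤ p) (hpl : 0 < p l)
    (hq : q ∈ kinfFeasible p μ f) : capAt p l q ∈ kinfFeasible p μ f :=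
  ⟨capAt_mem_stdSimplex hp hq.1, fun _ => eq_zero_of_capAt_eq_zero hp hpl hq.1 hq.2.1,
    hq.2.2.trans (dotProduct_le_dotProduct_capAt hf hq.1)⟩

end CapAt

/-- The distribution `p̄_s` with weights proportional to `s`; by the convention `x / 0 = 0` it is
the zero function when `s` has total mass zero. -/
def simplexNormalize {m : ℕ} (s : Fin (m + 1) → ℝ) : Fin (m + 1) → ℝ :=
  fun i => s i / ∑ j, s j

section Shift

variable {m : ℕ} {s r f α β : Fin (m + 1) → ℝ} {μ : ℝ} {l : Fin (m + 1)}

lemma simplexNormalize_mem_stdSimplex (hs : 0 ≤ s) (hsum : 0 < ∑ i, s i) :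
    simplexNormalize s ∈ stdSimplex ℝ (Fin (m + 1)) :=
  ⟨fun i => div_nonneg (hs i) hsum.le, by
    simp only [simplexNormalize, ← Finset.sum_div, div_self hsum.ne']⟩

lemma simplexNormalize_add (hα : ∑ i, α i ≠ 0) (hβ : ∑ i, β i ≠ 0) :
    simplexNormalize (α + β) =
      ((∑ i, α i) / (∑ i, α i + ∑ i, β i)) • simplexNormalize α +
        ((∑ i, β i) / (∑ i, α i + ∑ i, β i)) • simplexNormalize β := by
  ext i
  simp only [simplexNormalize, Pi.add_apply, Pi.smul_apply, smul_eq_mul, Finset.sum_add_distrib]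
  rw [div_mul_div_comm, div_mul_div_comm, mul_comm (∑ i, α i), mul_comm (∑ i, β i),
    mul_div_mul_right _ _ hα, mul_div_mul_right _ _ hβ, add_div]

lemma sum_mul_klReal_simplexNormalize (hs : ∑ i, s i ≠ 0) (hrs : ∀ i, r i = 0 → s i = 0) :
    (∑ i, s i) * klReal (simplexNormalize s) r =
      klReal s r - (∑ i, s i) * log (∑ i, s i) := by
  simp only [klReal_eq_sum, simplexNormalize, Finset.mul_sum]
  rw [Finset.sum_mul, ← Finset.sum_sub_distrib]
  refine Finset.sum_congr rfl fun i _ => ?_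
  rcases eq_or_ne (s i) 0 with h0 | hsi
  · simp [h0]
  rw [← mul_assoc, mul_div_cancel₀ _ hs, div_right_comm,
    log_div (div_ne_zero hsi (mt (hrs i) hsi)) hs, mul_sub]

lemma Kinf_simplexNormalize_add_le (hf : 0 ≤ f) (hα : 0 ≤ α) (hβ : 0 ≤ β)
    (hαsum : 0 < ∑ i, α i) (hμ : μ ∈ Ico 0 (f l)) :
    Kinf (simplexNormalize (α + β)) μ f ≤
      ((∑ i, α i) * Kinf (simplexNormalize α) μ f + (∑ i, β i) * log (f l / (f l - μ))) /
        (∑ i, α i + ∑ i, β i) := by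
  rcases (Fintype.sum_nonneg hβ).eq_or_lt with h0 | hβsum
  · obtain rfl : β = 0 := (Fintype.sum_eq_zero_iff_of_nonneg hβ).1 h0.symm
    simp [hαsum.ne']
  have hp := simplexNormalize_mem_stdSimplex hα hαsum
  have hp' := simplexNormalize_mem_stdSimplex hβ hβsum
  rw [simplexNormalize_add hαsum.ne' hβsum.ne', add_div, mul_div_right_comm, mul_div_right_comm]
  refine ((convexOn_Kinf hf hμ).2 hp hp' (by positivity) (by positivity)
    (by field_simp)).trans ?_
  simp only [smul_eq_mul]
  gcongr
  exact Kinf_le_log hp' hf hμ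

lemma mul_log_add_sub_log_le {A B : ℝ} (hA : 0 < A) (hB : 0 ≤ B) :
    A * (log (A + B) - log A) ≤ B := by
  rw [← log_div (by positivity) hA.ne']
  calc A * log ((A + B) / A) ≤ A * ((A + B) / A - 1) := by
        gcongr
        exact log_le_sub_one_of_pos (by positivity)
    _ = B := by field_simp; ring

lemma sum_mul_klReal_simplexNormalize_le (hα : 0 ≤ α) (hβ : 0 ≤ β) (hαsum : 0 < ∑ i, α i)
    (hr : 0 ≤ r) (hrαβ : r ≤ α + β) (hsupp : ∀ i, r i = 0 → (α + β) i = 0) :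
    (∑ i, α i) * klReal (simplexNormalize α) r ≤
      (∑ i, (α + β) i) * klReal (simplexNormalize (α + β)) r +
        (∑ i, β i) * (log (∑ i, (α + β) i) + 1) := by
  have hβsum : 0 ≤ ∑ i, β i := Fintype.sum_nonneg hβ
  have hsum : ∑ i, (α + β) i = ∑ i, α i + ∑ i, β i := Finset.sum_add_distrib
  have hsuppα (i) (hi : r i = 0) : α i = 0 :=
    le_antisymm ((le_add_of_nonneg_right (hβ i)).trans_eq (hsupp i hi)) (hα i)
  rw [sum_mul_klReal_simplexNormalize hαsum.ne' hsuppα,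
    sum_mul_klReal_simplexNormalize (by rw [hsum]; positivity) hsupp, hsum]
  linarith [mul_log_add_sub_log_le hαsum hβsum,
    klReal_mono_left hα (le_add_of_nonneg_right hβ) hr hrαβ]

lemma capAt_simplexNormalize_le {q : Fin (m + 1) → ℝ} (hs : 0 ≤ s) (hsl : 1 ≤ s l)
    (hsum : 0 < ∑ i, s i) (hq : q ∈ stdSimplex ℝ (Fin (m + 1))) :
    capAt (simplexNormalize s) l q ≤ s := by
  intro i
  have hp := simplexNormalize_mem_stdSimplex hs hsum
  have hpl : 0 < simplexNormalize s l := div_pos (one_pos.trans_le hsl) hsum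
  have hratio : s l * capAt (simplexNormalize s) l q i ≤ s i := by
    have hcap : (s l / ∑ j, s j) * capAt (simplexNormalize s) l q i ≤ s i / ∑ j, s j :=
      mul_capAt_le hp.1 hpl hq
    rwa [div_mul_eq_mul_div, div_le_div_iff_of_pos_right hsum] at hcap
  exact (le_mul_of_one_le_left ((capAt_mem_stdSimplex hp.1 hq).1 i) hsl).trans hratio

lemma sum_mul_Kinf_simplexNormalize_le (hf : ∀ i, f i ∈ Icc 0 (f l)) (hα : 0 ≤ α) (hβ : 0 ≤ β)
    (hαsum : 0 < ∑ i, α i) (hl : 1 ≤ (α + β) l) (hμ : μ ∈ Ico 0 (f l)) :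
    (∑ i, α i) * Kinf (simplexNormalize α) μ f ≤
      (∑ i, (α + β) i) * Kinf (simplexNormalize (α + β)) μ f +
        (∑ i, β i) * (log (∑ i, (α + β) i) + 1) := by
  have hαβ : 0 ≤ α + β := add_nonneg hα hβ
  have hsum : 0 < ∑ i, (α + β) i :=
    hαsum.trans_le (Finset.sum_le_sum fun i _ => le_add_of_nonneg_right (hβ i))
  have hp := simplexNormalize_mem_stdSimplex hαβ hsum
  have hpl : 0 < simplexNormalize (α + β) l := div_pos (one_pos.trans_le hl) hsum
  rw [← sub_le_iff_le_add, ← div_le_iff₀' hsum, Kinf_eq_sInf_image (simplexNormalize (α + β))]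
  refine le_csInf ((kinfFeasible_nonempty hp (fun i => (hf i).1) hμ).image _)
    (forall_mem_image.2 fun q hq => ?_)
  rw [div_le_iff₀' hsum, sub_le_iff_le_add]
  set r := capAt (simplexNormalize (α + β)) l q
  have hr : r ∈ kinfFeasible (simplexNormalize (α + β)) μ f :=
    capAt_mem_kinfFeasible (fun i => (hf i).2) hp.1 hpl hq
  have hsupp (i) (hi : r i = 0) : (α + β) i = 0 :=
    (div_eq_zero_iff.1 (hr.2.1 i hi)).resolve_right hsum.ne'
  have hsuppα (i) (hi : r i = 0) : simplexNormalize α i = 0 := by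
    have : α i + β i = 0 := hsupp i hi
    simp [simplexNormalize, ((add_eq_zero_iff_of_nonneg (hα i) (hβ i)).1 this).1]
  calc (∑ i, α i) * Kinf (simplexNormalize α) μ f
      ≤ (∑ i, α i) * klReal (simplexNormalize α) r := by
        gcongr
        exact Kinf_le_klReal (simplexNormalize_mem_stdSimplex hα hαsum)
          ⟨hr.1, hsuppα, hr.2.2⟩
    _ ≤ (∑ i, (α + β) i) * klReal (simplexNormalize (α + β)) r +
          (∑ i, β i) * (log (∑ i, (α + β) i) + 1) :=
        sum_mul_klReal_simplexNormalize_le hα hβ hαsum hr.1.1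
          (capAt_simplexNormalize_le hαβ hl hsum hq.1) hsupp
    _ ≤ _ := by
        gcongr
        exact klReal_capAt_le hp.1 hpl hq.1 hq.2.1

lemma half_le_log_of_Kinf_pos (hf : 0 ≤ f) (hα : 0 ≤ α) (hβ : 0 ≤ β) (hαsum : 0 < ∑ i, α i)
    (hβα : ∑ i, β i ≤ ∑ i, α i) (hl : 1 ≤ (α + β) l) (hμ : μ ∈ Ico 0 (f l))
    (hK : 0 < Kinf (simplexNormalize α) μ f) :
    1 / 2 ≤ log (f l * (∑ i, α i + ∑ i, β i) / (f l - μ)) := by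
  have hp := simplexNormalize_mem_stdSimplex hα hαsum
  have hfl : 0 < f l := hμ.1.trans_lt hμ.2
  have hgap : 0 < f l - μ := sub_pos.2 hμ.2
  have hβl : β l ≤ ∑ i, β i := Finset.single_le_sum (fun i _ => hβ i) (Finset.mem_univ l)
  set A := ∑ i, α i
  set B := ∑ i, β i
  have hB : 0 ≤ B := Fintype.sum_nonneg hβ
  have hmean : f l * α l < μ * A := by
    have hlt : f ⬝ᵥ simplexNormalize α < μ :=
      lt_of_not_ge fun h => hK.ne' (Kinf_eq_zero_of_le_dotProduct hp h)
    have hle : f l * simplexNormalize α l ≤ f ⬝ᵥ simplexNormalize α :=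
      Finset.single_le_sum (f := fun i => f i * simplexNormalize α i)
        (fun i _ => mul_nonneg (hf i) (hp.1 i)) (Finset.mem_univ l)
    rw [← div_lt_iff₀ hαsum, mul_div_assoc]
    exact hle.trans_lt hlt
  have hgap_lt : A * (f l - μ) < f l * (A + B - 1) := by
    have : f l * (1 - B) ≤ f l * α l := by
      gcongr
      linarith [show 1 ≤ α l + β l from hl]
    linarith
  have hquad : A + B - 1 ≤ A * (A + B) / 2 := by
    linarith [sq_nonneg (A + B - 2), mul_nonneg (add_nonneg hαsum.le hB) (sub_nonneg.2 hβα)]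
  have hhalf : (f l - μ) / (f l * (A + B)) ≤ 1 / 2 := by
    rw [div_le_iff₀ (by positivity)]
    refine le_of_mul_le_mul_left ?_ hαsum
    calc A * (f l - μ) ≤ f l * (A * (A + B) / 2) := hgap_lt.le.trans (by gcongr)
      _ = A * (1 / 2 * (f l * (A + B))) := by ring
  have hlog := one_sub_inv_le_log_of_pos (show 0 < f l * (A + B) / (f l - μ) by positivity)
  rw [inv_div] at hlog
  linarith

lemma one_le_sum_add_sum (hα : 0 ≤ α) (hβ : 0 ≤ β) (hl : 1 ≤ (α + β) l) :
    1 ≤ ∑ i, α i + ∑ i, β i := by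
  rw [← Finset.sum_add_distrib]
  exact hl.trans (Finset.single_le_sum (f := α + β)
    (fun i _ => add_nonneg (hα i) (hβ i)) (Finset.mem_univ l))

lemma sum_mul_Kinf_sub_Kinf_le (hf : ∀ i, f i ∈ Icc 0 (f l)) (hα : 0 ≤ α) (hβ : 0 ≤ β)
    (hαsum : 0 < ∑ i, α i) (hl : 1 ≤ (α + β) l) (hμ : μ ∈ Ico 0 (f l)) :
    (∑ i, α i) * (Kinf (simplexNormalize α) μ f - Kinf (simplexNormalize (α + β)) μ f) ≤
      (∑ i, β i) * (log (f l * (∑ i, α i + ∑ i, β i) / (f l - μ)) + 1) := by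
  have hfl : 0 < f l := hμ.1.trans_lt hμ.2
  have hgap : 0 < f l - μ := sub_pos.2 hμ.2
  have hβsum : 0 ≤ ∑ i, β i := Fintype.sum_nonneg hβ
  have hsum : ∑ i, (α + β) i = ∑ i, α i + ∑ i, β i := Finset.sum_add_distrib
  have hK' : Kinf (simplexNormalize (α + β)) μ f ≤ log (f l / (f l - μ)) :=
    Kinf_le_log (simplexNormalize_mem_stdSimplex (add_nonneg hα hβ) (by rw [hsum]; positivity))
      (fun i => (hf i).1) hμ
  have hmain := sum_mul_Kinf_simplexNormalize_le hf hα hβ hαsum hl hμ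
  rw [mul_div_right_comm, log_mul (by positivity) (by positivity)]
  rw [hsum] at hmain
  linarith [mul_le_mul_of_nonneg_left hK' hβsum]

lemma Kinf_simplexNormalize_sub_le (hf : ∀ i, f i ∈ Icc 0 (f l)) (hα : 0 ≤ α) (hβ : 0 ≤ β)
    (hαsum : 0 < ∑ i, α i) (hl : 1 ≤ (α + β) l) (hμ : μ ∈ Ico 0 (f l)) :
    Kinf (simplexNormalize α) μ f -
        3 * (∑ i, β i) / (∑ i, α i) * log (f l * (∑ i, α i + ∑ i, β i) / (f l - μ)) ≤
      Kinf (simplexNormalize (α + β)) μ f := by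
  have hf0 : 0 ≤ f := fun i => (hf i).1
  have hgap : 0 < f l - μ := sub_pos.2 hμ.2
  have hone := one_le_sum_add_sum hα hβ hl
  have hβsum : 0 ≤ ∑ i, β i := Fintype.sum_nonneg hβ
  have hp := simplexNormalize_mem_stdSimplex hα hαsum
  have hp' : simplexNormalize (α + β) ∈ stdSimplex ℝ (Fin (m + 1)) :=
    simplexNormalize_mem_stdSimplex (add_nonneg hα hβ)
      (by simp only [Pi.add_apply, Finset.sum_add_distrib]; positivity)
  have hK'_nonneg : 0 ≤ Kinf (simplexNormalize (α + β)) μ f := Kinf_nonneg hp'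
  have hdiff := sum_mul_Kinf_sub_Kinf_le hf hα hβ hαsum hl hμ
  set A := ∑ i, α i
  set B := ∑ i, β i
  set L := log (f l * (A + B) / (f l - μ))
  have hKL : Kinf (simplexNormalize α) μ f ≤ L := by
    refine (Kinf_le_log hp hf0 hμ).trans (log_le_log (div_pos (hμ.1.trans_lt hμ.2) hgap) ?_)
    gcongr
    exact le_mul_of_one_le_right (hμ.1.trans hμ.2.le) hone
  have hL : 0 ≤ L := (Kinf_nonneg hp).trans hKL
  rcases le_total A B with hAB | hBA
  · have : 1 ≤ 3 * B / A := (one_le_div hαsum).2 (by linarith)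
    linarith [le_mul_of_one_le_left hL this]
  rcases (Kinf_nonneg (μ := μ) (f := f) hp).eq_or_lt with hK | hK
  · rw [← hK]
    linarith [show 0 ≤ 3 * B / A * L by positivity]
  · have hhalf : 1 / 2 ≤ L := half_le_log_of_Kinf_pos hf0 hα hβ hαsum hBA hl hμ hK
    have hB : B * 1 ≤ B * (2 * L) := by gcongr; linarith
    rw [sub_le_comm, div_mul_eq_mul_div, le_div_iff₀' hαsum]
    linarith

end Shift

theorem kinf_distribution_shift_general {m : ℕ} {f α β : Fin (m + 1) → ℝ} {μ : ℝ}
    {l : Fin (m + 1)} (hf : ∀ i, f i ∈ Icc 0 (f l)) (hα : 0 ≤ α) (hβ : 0 ≤ β)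
    (hl : 1 ≤ (α + β) l) (hαsum : 0 < ∑ i, α i) (hμ : μ ∈ Ico 0 (f l)) :
    Kinf (simplexNormalize α) μ f -
        3 * (∑ i, β i) / (∑ i, α i) * log (f l * (∑ i, α i + ∑ i, β i) / (f l - μ)) ≤
      Kinf (simplexNormalize (α + β)) μ f ∧
    Kinf (simplexNormalize (α + β)) μ f ≤
      ((∑ i, α i) * Kinf (simplexNormalize α) μ f + (∑ i, β i) * log (f l / (f l - μ))) /
        (∑ i, α i + ∑ i, β i) :=
  ⟨Kinf_simplexNormalize_sub_le hf hα hβ hαsum hl hμ,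
    Kinf_simplexNormalize_add_le (fun i => (hf i).1) hα hβ hαsum hμ⟩

/-- **Stability of `Kinf` under a shift of the underlying distribution** (Lemma on
distribution shifts). For a nonzero nonnegative `s`, `p̄_s(i) = s_i / ∑_j s_j`. -/
theorem kinf_distribution_shift
    (m : ℕ) (hm : 1 ≤ m) (b : ℝ) (hb : 0 < b)
    (f : Fin (m + 1) → ℝ) (hf : ∀ i, f i ∈ Set.Icc (0 : ℝ) b)
    (hf0 : f 0 = 0) (hfm : f (Fin.last m) = b)
    (α β : Fin (m + 1) → ℝ) (hα : ∀ i, 0 ≤ α i) (hβ : ∀ i, 0 ≤ β i)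
    (hαβm : 1 ≤ β (Fin.last m) + α (Fin.last m))
    (hαsum : 0 < ∑ i, α i)
    (μ : ℝ) (hμ : μ ∈ Set.Ioo (0 : ℝ) b) :
    Kinf (fun i => α i / ∑ j, α j) μ f -
        (3 * (∑ i, β i) / (∑ i, α i)) *
          Real.log (b * ((∑ i, α i) + ∑ i, β i) / (b - μ))
      ≤ Kinf (fun i => (α i + β i) / ∑ j, (α j + β j)) μ f ∧
    Kinf (fun i => (α i + β i) / ∑ j, (α j + β j)) μ f ≤
      ((∑ i, α i) * Kinf (fun i => α i / ∑ j, α j) μ f +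
        (∑ i, β i) * Real.log (b / (b - μ))) / ((∑ i, α i) + ∑ i, β i) := by
  subst hfm
  exact kinf_distribution_shift_general hf hα hβ (hαβm.trans_eq (add_comm _ _)) hαsum
    (Ioo_subset_Ico_self hμ)

end
end
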